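/- Let R be a generically Gorenstein local Cohen–Macaulay Noetherian ring of dimension 1 and let R ⊆ S ⊆ Q(R) be a module finite birational extension such that S is a Gorenstein ring. Then the following are equivalent: (i) every finitely generated torsion-free S-module is reflexive as an R-module (CM(S) ⊆ refl(R)); (ii) S ≅ Hom_R(S, R) as R-modules; (iii) S is a reflexive R-module and the conductor c_R(S) = (R : S) is a stable ideal. -/

import Mathlib

set_option maxHeartbeats 1000000
set_option synthInstance.maxHeartbeats 400000

open CategoryTheory

universe u

/-- The `i`-th Ext module `Ext_A^i(M, N)` over a commutative ring `A`. -/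
noncomputable def ExtModule (A : Type u) [CommRing A] (M N : Type u)
    [AddCommGroup M] [Module A M] [AddCommGroup N] [Module A N] (i : ℕ) : ModuleCat.{u} A :=
  ((Ext A (ModuleCat.{u} A) i).obj (Opposite.op (ModuleCat.of A M))).obj (ModuleCat.of A N)

/-- A module is torsion-free if nonzerodivisors of the ring act injectively. -/
def IsTorsionFreeModule (A : Type*) [CommRing A] (M : Type*) [AddCommGroup M]
    [Module A M] : Prop :=
  ∀ a ∈ nonZeroDivisors A, ∀ m : M, a • m = 0 → m = 0

/-- The grade of an ideal `J`: the length of a maximal regular sequence contained in `J`. -/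
noncomputable def Ideal.grade {A : Type*} [CommRing A] (J : Ideal A) : ℕ∞ :=
  sSup {n : ℕ∞ | ∃ rs : List A, (rs.length : ℕ∞) = n ∧ (∀ r ∈ rs, r ∈ J) ∧
    RingTheory.Sequence.IsWeaklyRegular A rs}

/-- A Cohen–Macaulay local ring: Noetherian local with depth equal to Krull dimension. -/
def IsCohenMacaulayLocalRing (A : Type*) [CommRing A] : Prop :=
  IsNoetherianRing A ∧ ∃ _ : IsLocalRing A,
    ((IsLocalRing.maximalIdeal A).grade : WithBot ℕ∞) = ringKrullDim A

/-- A Cohen–Macaulay ring: Noetherian, all localizations at primes are CM local rings. -/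
def IsCohenMacaulayRing (A : Type*) [CommRing A] : Prop :=
  IsNoetherianRing A ∧ ∀ (p : Ideal A) [p.IsPrime],
    IsCohenMacaulayLocalRing (Localization.AtPrime p)

/-- A Gorenstein local ring: Noetherian local of finite self-injective dimension,
expressed via vanishing of `Ext^{n+1}(A/I, A)` for all ideals `I` (Baer's criterion). -/
def IsGorensteinLocalRing (A : Type u) [CommRing A] : Prop :=
  IsLocalRing A ∧ IsNoetherianRing A ∧
    ∃ n : ℕ, ∀ I : Ideal A, Subsingleton (ExtModule A (A ⧸ I) A (n + 1))

/-- A Gorenstein ring: Noetherian, all localizations at maximal ideals are Gorenstein local. -/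
def IsGorensteinRing (A : Type u) [CommRing A] : Prop :=
  IsNoetherianRing A ∧ ∀ (m : Ideal A) [m.IsMaximal],
    IsGorensteinLocalRing (Localization.AtPrime m)

/-- Generically Gorenstein: the localization at every associated prime is Gorenstein. -/
def IsGenericallyGorenstein (A : Type u) [CommRing A] : Prop :=
  ∀ (p : Ideal A) [p.IsPrime], p ∈ associatedPrimes A A →
    IsGorensteinLocalRing (Localization.AtPrime p)

/-- The trace ideal of a module: the sum of the images of all linear maps to the ring. -/
def traceIdeal (A : Type*) [CommRing A] (M : Type*) [AddCommGroup M] [Module A M] :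
    Ideal A :=
  ⨆ f : M →ₗ[A] A, LinearMap.range f

/-- The image of an ideal inside the total ring of fractions. -/
noncomputable def Ideal.toFrac {A : Type u} [CommRing A] (I : Ideal A) :
    Submodule A (FractionRing A) :=
  Submodule.map (Algebra.linearMap A (FractionRing A)) I

/-- The conductor `(R : S)` of a birational extension `R ⊆ S ⊆ Q(R)`,
as a submodule of the total ring of fractions. -/
noncomputable def conductorFrac (R : Type u) [CommRing R]
    (S : Subalgebra R (FractionRing R)) : Submodule R (FractionRing R) :=
  (1 : Submodule R (FractionRing R)) / Subalgebra.toSubmodule S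

/-- `M ∈ Ω CM(A)`: there is an exact sequence `0 → M → P → N → 0` with `P` a finitely
generated projective `A`-module and `N` a finitely generated torsion-free
(equivalently, over a 1-dimensional CM ring, maximal Cohen–Macaulay) `A`-module. -/
def InSyzygyOfCM (A : Type u) [CommRing A] (M : Type u) [AddCommGroup M] [Module A M] :
    Prop :=
  ∃ (P N : Type u) (_ : AddCommGroup P) (_ : Module A P) (_ : AddCommGroup N)
    (_ : Module A N), Module.Projective A P ∧ Module.Finite A P ∧ Module.Finite A N ∧
      IsTorsionFreeModule A N ∧
      ∃ (f : M →ₗ[A] P) (g : P →ₗ[A] N),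
        Function.Injective f ∧ Function.Surjective g ∧ LinearMap.range f = LinearMap.ker g

/-!
Since `S` is one-dimensional Gorenstein, `Ext¹_S(-, S)` kills torsion-free modules and the finite
ones are `S`-reflexive. Let `C = (R : S)`, an `S`-submodule of `Q = Q(R) = Q(S)`. For a regular
fractional ideal `D` of `S`, `(C : D)` is the `R`-dual of `D`, so (i) gives `(C : (C : D)) = D`.
Taking `D = S` yields `(C : C) = S`, and taking `D = C (S : C)` yields
`D = (C : ((C : C) : (S : C))) = (C : (S : (S : C))) = (C : C) = S`. Hence `C` is invertible, and
principal because `S` is semilocal, so that `S ≅ C ≅ Hom_R(S, R)`.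

Conversely, an isomorphism `S ≅ Hom_R(S, R)` has the form `s ↦ τ (s · -)`, and composition with `τ`
identifies `S`-duals with `R`-duals, so `S`-reflexive modules are `R`-reflexive. Finally, when `S`
is `R`-reflexive, `(C : C) = ((R : C) : S) = (S : S) = S`, and stability of `C` means `C ≅ S`.
-/

section ExtVanishing

open Abelian

variable {C : Type*} [Category C] [Abelian C] [HasExt.{u} C] {S : ShortComplex C} {Y : C} {n : ℕ}

theorem subsingleton_ext_of_isZero {X : C} (hX : Limits.IsZero X) : Subsingleton (Ext X Y n) :=
  have := hX.hasProjectiveDimensionLT_zero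
  HasProjectiveDimensionLT.subsingleton X 0 n (Nat.zero_le n) Y

theorem subsingleton_ext_of_iso {X X' : C} (e : X ≅ X') (h : Subsingleton (Ext X' Y n)) :
    Subsingleton (Ext X Y n) := by
  refine subsingleton_of_forall_eq 0 fun x => ?_
  have hx : x = (Ext.mk₀ e.hom).comp ((Ext.mk₀ e.inv).comp x (zero_add n)) (zero_add n) := by
    simp only [Ext.mk₀_comp_mk₀_assoc, Iso.hom_inv_id, Ext.mk₀_id_comp]
  rw [hx, h.elim ((Ext.mk₀ e.inv).comp x (zero_add n)) 0, Ext.comp_zero]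

theorem subsingleton_ext_X₁ (hS : S.ShortExact) (h₂ : Subsingleton (Ext S.X₂ Y n))
    (h₃ : Subsingleton (Ext S.X₃ Y (n + 1))) : Subsingleton (Ext S.X₁ Y n) := by
  refine subsingleton_of_forall_eq 0 fun x => ?_
  obtain ⟨y, rfl⟩ := Ext.contravariant_sequence_exact₁ hS Y x (add_comm 1 n) (h₃.elim _ _)
  rw [h₂.elim y 0, Ext.comp_zero]

theorem subsingleton_ext_X₂ (hS : S.ShortExact) (h₁ : Subsingleton (Ext S.X₁ Y n))
    (h₃ : Subsingleton (Ext S.X₃ Y n)) : Subsingleton (Ext S.X₂ Y n) := by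
  refine subsingleton_of_forall_eq 0 fun x => ?_
  obtain ⟨y, rfl⟩ := Ext.contravariant_sequence_exact₂ hS Y x (h₁.elim _ _)
  rw [h₃.elim y 0, Ext.comp_zero]

theorem subsingleton_ext_X₃ (hS : S.ShortExact) (h₁ : Subsingleton (Ext S.X₁ Y n))
    (h₂ : Subsingleton (Ext S.X₂ Y (n + 1))) : Subsingleton (Ext S.X₃ Y (n + 1)) := by
  refine subsingleton_of_forall_eq 0 fun x => ?_
  obtain ⟨y, rfl⟩ :=
    Ext.contravariant_sequence_exact₃ hS Y x (h₂.elim _ _) (add_comm 1 n)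
  rw [h₁.elim y 0, Ext.comp_zero]

theorem exists_comp_eq_of_subsingleton_ext_one (hS : S.ShortExact)
    (h : Subsingleton (Ext S.X₃ Y 1)) (φ : S.X₁ ⟶ Y) : ∃ ψ : S.X₂ ⟶ Y, S.f ≫ ψ = φ := by
  obtain ⟨y, hy⟩ :=
    Ext.contravariant_sequence_exact₁ hS Y (Ext.mk₀ φ) (add_zero 1) (h.elim _ _)
  obtain ⟨ψ, rfl⟩ := Ext.addEquiv₀.symm.surjective y
  rw [Ext.addEquiv₀_symm_apply, Ext.mk₀_comp_mk₀] at hy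
  exact ⟨ψ, (Ext.mk₀_bijective _ _).1 hy⟩

end ExtVanishing

section InjectiveDimension

open Abelian
open scoped Pointwise

variable {A : Type u} [CommRing A]

theorem subsingleton_abelianExt_of_extModule {M N : Type u} [AddCommGroup M] [Module A M]
    [AddCommGroup N] [Module A N] {n : ℕ} (h : Subsingleton (ExtModule A M N (n + 1))) :
    Subsingleton (Ext (ModuleCat.of A M) (ModuleCat.of A N) (n + 1)) := by
  let P := ProjectiveResolution.of (ModuleCat.of A M)
  have hexact := (ModuleCat.isZero_of_subsingleton (ExtModule A M N (n + 1))).of_iso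
    (P.isoExt (R := A) (n + 1) (ModuleCat.of A N)).symm
  rw [← HomologicalComplex.exactAt_iff_isZero_homology,
    HomologicalComplex.exactAt_iff' _ n (n + 1) (n + 2) (by simp) (by simp),
    ShortComplex.moduleCat_exact_iff] at hexact
  refine subsingleton_of_forall_eq 0 fun x => ?_
  obtain ⟨f, hf, rfl⟩ := P.extMk_surjective x (n + 2) rfl
  exact (P.extMk_eq_zero_iff f (n + 2) rfl hf n rfl).2 (hexact f hf)

theorem exists_comp_eq_of_subsingleton_ext {K F N Y : Type u} [AddCommGroup K] [Module A K]
    [AddCommGroup F] [Module A F] [AddCommGroup N] [Module A N] [AddCommGroup Y] [Module A Y]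
    {f : K →ₗ[A] F} {g : F →ₗ[A] N} (hf : Function.Injective f) (hg : Function.Surjective g)
    (hfg : Function.Exact f g)
    (h : Subsingleton (Ext (ModuleCat.of A N) (ModuleCat.of A Y) 1)) (φ : K →ₗ[A] Y) :
    ∃ ψ : F →ₗ[A] Y, ψ ∘ₗ f = φ := by
  obtain ⟨ψ, hψ⟩ := exists_comp_eq_of_subsingleton_ext_one
    (ModuleCat.shortComplex_shortExact
      (ModuleCat.shortComplexOfCompEqZero f g hfg.linearMap_comp_eq_zero) hfg hf hg)
    h (ModuleCat.ofHom φ)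
  exact ⟨ψ.hom, congrArg ModuleCat.Hom.hom hψ⟩

theorem hasInjectiveDimensionLE_of_subsingleton_ext_quotient {Y : ModuleCat.{u} A} {n : ℕ}
    (h : ∀ I : Ideal A, Subsingleton (Ext (ModuleCat.of A (A ⧸ I)) Y (n + 1))) :
    HasInjectiveDimensionLE Y n := by
  induction n generalizing Y with
  | zero =>
    have hbaer : Module.Baer A Y := fun I g => by
      obtain ⟨g', hg'⟩ := exists_comp_eq_of_subsingleton_ext I.subtype_injective
        I.mkQ_surjective (LinearMap.exact_subtype_mkQ I) (h I) g
      exact ⟨g', fun x hx => LinearMap.congr_fun hg' ⟨x, hx⟩⟩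
    have := (Module.injective_iff_injective_object A Y).1 hbaer.injective
    exact inferInstanceAs (HasInjectiveDimensionLT Y 1)
  | succ n ih =>
    obtain ⟨E, _, f, _⟩ := EnoughInjectives.presentation Y
    let S := ShortComplex.mk f (Limits.cokernel.π f) (Limits.cokernel.condition f)
    have hS : S.ShortExact := { exact := ShortComplex.exact_cokernel f }
    refine (hS.hasInjectiveDimensionLT_X₃_iff n ‹_›).1 (ih fun I => ?_)
    refine subsingleton_of_forall_eq 0 fun x => ?_
    obtain ⟨y, rfl⟩ := Ext.covariant_sequence_exact₃ _ hS x rfl ((h I).elim _ _)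
    rw [Ext.eq_zero_of_injective y, Ext.zero_comp]

theorem isMaximal_of_mem_nonZeroDivisors [Ring.KrullDimLE 1 A] {b : A}
    (hb : b ∈ nonZeroDivisors A) {p : Ideal A} (hp : p.IsPrime) (hbp : b ∈ p) : p.IsMaximal :=
  (Ring.krullDimLE_one_iff.1 ‹_› p hp).resolve_left fun hmin =>
    Set.disjoint_left.1 (Ideal.disjoint_nonZeroDivisors_of_mem_minimalPrimes hmin) hbp hb

variable [IsNoetherianRing A] {Y : ModuleCat.{u} A} {n : ℕ}

theorem subsingleton_ext_of_forall_isPrime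
    (h : ∀ p : Ideal A, p.IsPrime → Subsingleton (Ext (ModuleCat.of A (A ⧸ p)) Y n))
    (N : Type u) [AddCommGroup N] [Module A N] [Module.Finite A N] :
    Subsingleton (Ext (ModuleCat.of A N) Y n) := by
  refine IsNoetherianRing.induction_on_isQuotientEquivQuotientPrime A (M := N) inferInstance
    (motive := fun N _ _ _ => Subsingleton (Ext (ModuleCat.of A N) Y n)) ?_ ?_ ?_
  · exact fun N _ _ _ _ => subsingleton_ext_of_isZero (ModuleCat.isZero_of_subsingleton _)
  · exact fun N _ _ _ p e => subsingleton_ext_of_iso e.toModuleIso (h p.1 p.2)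
  · intro N₁ _ _ _ N₂ _ _ _ N₃ _ _ _ f g hf hg hfg
    exact subsingleton_ext_X₂ (ModuleCat.shortComplex_shortExact
      (ModuleCat.shortComplexOfCompEqZero f g hfg.linearMap_comp_eq_zero) hfg hf hg)

theorem hasInjectiveDimensionLE_of_forall_isPrime
    (h : ∀ p : Ideal A, p.IsPrime → Subsingleton (Ext (ModuleCat.of A (A ⧸ p)) Y (n + 1))) :
    HasInjectiveDimensionLE Y n :=
  hasInjectiveDimensionLE_of_subsingleton_ext_quotient fun I =>
    subsingleton_ext_of_forall_isPrime h (A ⧸ I)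

variable {b : A}

theorem subsingleton_ext_of_quotSMulTop [Module.Finite A Y] {N : ModuleCat.{u} A}
    [Module.Finite A N] (hb : b ∈ Ideal.jacobson (⊥ : Ideal A)) (hN : IsSMulRegular N b)
    (h : Subsingleton (Ext (ModuleCat.of A (QuotSMulTop b N)) Y (n + 1))) :
    Subsingleton (Ext N Y n) := by
  have hle : (⊤ : Submodule A (Ext N Y n)) ≤ Ideal.span {b} • ⊤ := fun y _ => by
    obtain ⟨z, rfl⟩ : ∃ z : Ext N Y n, (Ext.mk₀ (b • 𝟙 N)).comp z (zero_add n) = y :=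
      Ext.contravariant_sequence_exact₁ hN.smulShortComplex_shortExact Y y (add_comm 1 n)
        (h.elim _ _)
    rw [Ext.mk₀_smul, Ext.smul_comp, Ext.mk₀_id_comp]
    exact Submodule.smul_mem_smul (Ideal.mem_span_singleton_self b) trivial
  exact (Submodule.subsingleton_iff A).1 <| subsingleton_of_bot_eq_top <| Eq.symm <|
    Submodule.eq_bot_of_le_smul_of_le_jacobson_bot _ _ Module.Finite.fg_top hle
      ((Ideal.span_singleton_le_iff_mem _).2 hb)

theorem mem_associatedPrimes_quotSMulTop [Ring.KrullDimLE 1 A] (hb : b ∈ nonZeroDivisors A)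
    {p : Ideal A} (hp : p.IsMaximal) (hbp : b ∈ p) :
    p ∈ associatedPrimes A (QuotSMulTop b A) := by
  refine Module.associatedPrimes.minimalPrimes_annihilator_subset_associatedPrimes A _
    ⟨⟨hp.isPrime, fun x hx => ?_⟩, fun q hq hqp => ?_⟩
  · obtain ⟨c, -, rfl⟩ : x ∈ b • (⊤ : Submodule A A) := by
      have h := Module.mem_annihilator.1 hx (Submodule.Quotient.mk (1 : A))
      rwa [← Submodule.Quotient.mk_smul, Submodule.Quotient.mk_eq_zero, smul_eq_mul,
        mul_one] at h
    exact p.mul_mem_right c hbp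
  · have hqmax := isMaximal_of_mem_nonZeroDivisors hb hq.1
      (hq.2 (QuotSMulTop.mem_annihilator A b))
    exact (hqmax.eq_of_le hp.ne_top hqp).ge

theorem hasInjectiveDimensionLE_of_succ [Ring.KrullDimLE 1 A] [Module.Finite A Y]
    (hb : b ∈ nonZeroDivisors A) (hbJ : b ∈ Ideal.jacobson (⊥ : Ideal A))
    (hY : HasInjectiveDimensionLE Y (n + 2)) : HasInjectiveDimensionLE Y (n + 1) := by
  have hvanish (N : ModuleCat.{u} A) : Subsingleton (Ext N Y (n + 3)) :=
    HasInjectiveDimensionLT.subsingleton Y (n + 3) (n + 3) le_rfl N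
  refine hasInjectiveDimensionLE_of_forall_isPrime fun p hp => ?_
  by_cases hbp : b ∈ p
  · have hmax := isMaximal_of_mem_nonZeroDivisors hb hp hbp
    obtain ⟨f, hf⟩ := ((isAssociatedPrime_iff_exists_injective_linearMap p _).1
      (mem_associatedPrimes_quotSMulTop hb hmax hbp)).2
    have hreg : IsSMulRegular (ModuleCat.of A A) b :=
      Module.Flat.isSMulRegular_of_nonZeroDivisors (M := A) hb
    have := (IsProjective.iff_projective (R := A) A).1 inferInstance
    have hfree (k : ℕ) : Subsingleton (Ext (ModuleCat.of A A) Y (k + 1)) :=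
      Ext.subsingleton_of_projective _ Y k
    have hquot : Subsingleton (Ext (ModuleCat.of A (QuotSMulTop b A)) Y (n + 2)) :=
      subsingleton_ext_X₃ hreg.smulShortComplex_shortExact (hfree n) (hfree (n + 1))
    exact subsingleton_ext_X₁ (ModuleCat.shortComplex_shortExact
      (ModuleCat.shortComplexOfCompEqZero f f.range.mkQ
        f.exact_map_mkQ_range.linearMap_comp_eq_zero)
      f.exact_map_mkQ_range hf (Submodule.mkQ_surjective _)) hquot (hvanish _)
  · refine subsingleton_ext_of_quotSMulTop hbJ (fun x y hxy => ?_) (hvanish _)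
    have hb0 : Ideal.Quotient.mk p b ≠ 0 := mt Ideal.Quotient.eq_zero_iff_mem.1 hbp
    exact mul_left_cancel₀ hb0 hxy

theorem hasInjectiveDimensionLE_one [Ring.KrullDimLE 1 A] [Module.Finite A Y]
    (hb : b ∈ nonZeroDivisors A) (hbJ : b ∈ Ideal.jacobson (⊥ : Ideal A))
    (hY : HasInjectiveDimensionLE Y n) : HasInjectiveDimensionLE Y 1 := by
  induction n with
  | zero => exact inferInstanceAs (HasInjectiveDimensionLT Y (1 + 1))
  | succ n ih =>
    cases n with
    | zero => exact hY
    | succ n => exact ih (hasInjectiveDimensionLE_of_succ hb hbJ hY)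

theorem finite_setOf_isMaximal [Ring.KrullDimLE 1 A] (hb : b ∈ nonZeroDivisors A)
    (hbJ : b ∈ Ideal.jacobson (⊥ : Ideal A)) : {p : Ideal A | p.IsMaximal}.Finite := by
  refine (Ideal.finite_minimalPrimes_of_isNoetherianRing A (Ideal.span {b})).subset
    fun p hp => ⟨⟨hp.isPrime, ?_⟩, fun q hq hqp => ?_⟩
  · exact (Ideal.span_singleton_le_iff_mem _).2 (Ideal.mem_sInf.1 hbJ ⟨bot_le, hp⟩)
  · exact ((isMaximal_of_mem_nonZeroDivisors hb hq.1
      (hq.2 (Ideal.mem_span_singleton_self b))).eq_of_le hp.ne_top hqp).ge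

theorem exists_hasInjectiveDimensionLE_of_isGorensteinRing (hA : IsGorensteinRing A)
    (hfin : {p : Ideal A | p.IsMaximal}.Finite) :
    ∃ n, HasInjectiveDimensionLE (ModuleCat.of A A) n := by
  have : Finite (MaximalSpectrum A) :=
    (MaximalSpectrum.equivSubtype A).finite_iff.2 hfin
  have hloc (m : MaximalSpectrum A) : ∃ n, HasInjectiveDimensionLE
      ((ModuleCat.of A A).localizedModule m.1.primeCompl) n := by
    obtain ⟨-, -, n, hn⟩ := hA.2 m.1
    have := (ModuleCat.of A A).localizedModule_isLocalizedModule m.1.primeCompl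
    refine ⟨n, (ModuleCat.hasInjectiveDimensionLE_iff_of_linearEquiv ?_ n).1
      (hasInjectiveDimensionLE_of_subsingleton_ext_quotient fun I =>
        subsingleton_abelianExt_of_extModule (hn I))⟩
    exact LinearEquiv.extendScalarsOfIsLocalization m.1.primeCompl (Localization.AtPrime m.1)
      (IsLocalizedModule.linearEquiv m.1.primeCompl
        (Algebra.linearMap A (Localization.AtPrime m.1))
        ((ModuleCat.of A A).localizedModuleMkLinearMap m.1.primeCompl))
  choose n hn using hloc
  obtain ⟨N, hN⟩ := Finite.exists_le n
  exact ⟨N, (ModuleCat.hasInjectiveDimensionLE_iff_forall_maximalSpectrum N _).2 fun m =>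
    have := hn m
    hasInjectiveDimensionLT_of_ge _ (n m + 1) (N + 1) (by have := hN m; omega)⟩

end InjectiveDimension

section Reflexive

open Abelian

variable {A : Type u} [CommRing A]

theorem surjective_dualMap_of_subsingleton_ext {K F N : Type u} [AddCommGroup K] [Module A K]
    [AddCommGroup F] [Module A F] [AddCommGroup N] [Module A N] {f : K →ₗ[A] F} {g : F →ₗ[A] N}
    (hf : Function.Injective f) (hg : Function.Surjective g) (hfg : Function.Exact f g)
    (h : Subsingleton (Ext (ModuleCat.of A N) (ModuleCat.of A A) 1)) :
    Function.Surjective f.dualMap :=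
  exists_comp_eq_of_subsingleton_ext hf hg hfg h

theorem isSMulRegular_dual {b : A} (hb : b ∈ nonZeroDivisors A) (N : Type*) [AddCommGroup N]
    [Module A N] : IsSMulRegular (Module.Dual A N) b := fun _ _ h =>
  LinearMap.ext fun x => (mul_cancel_left_mem_nonZeroDivisors hb).1 (LinearMap.congr_fun h x)

variable [IsNoetherianRing A] {b : A}

theorem subsingleton_ext_one_of_isSMulRegular (hbJ : b ∈ Ideal.jacobson (⊥ : Ideal A))
    [HasInjectiveDimensionLE (ModuleCat.of A A) 1] {N : Type u} [AddCommGroup N]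
    [Module A N] [Module.Finite A N] (hN : IsSMulRegular N b) :
    Subsingleton (Ext (ModuleCat.of A N) (ModuleCat.of A A) 1) :=
  subsingleton_ext_of_quotSMulTop (N := ModuleCat.of A N) hbJ hN
    (HasInjectiveDimensionLT.subsingleton _ 2 2 le_rfl _)

theorem surjective_dual_eval (hb : b ∈ nonZeroDivisors A)
    (hbJ : b ∈ Ideal.jacobson (⊥ : Ideal A))
    [HasInjectiveDimensionLE (ModuleCat.of A A) 1] (M : Type u) [AddCommGroup M]
    [Module A M] [Module.Finite A M] (hM : IsSMulRegular M b) :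
    Function.Surjective (Module.Dual.eval A M) := by
  obtain ⟨n, g, hg⟩ := Module.Finite.exists_fin' A M
  let K := LinearMap.ker g
  have hexact : Function.Exact g.dualMap K.subtype.dualMap :=
    LinearMap.exact_lcomp_of_exact_of_surjective _ (LinearMap.exact_subtype_ker_map g) hg
  have hsurj : Function.Surjective K.subtype.dualMap :=
    surjective_dualMap_of_subsingleton_ext K.subtype_injective hg
      (LinearMap.exact_subtype_ker_map g) (subsingleton_ext_one_of_isSMulRegular hbJ hM)
  have hsurj' : Function.Surjective g.dualMap.dualMap :=
    surjective_dualMap_of_subsingleton_ext (LinearMap.dualMap_injective_of_surjective hg) hsurj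
      hexact (subsingleton_ext_one_of_isSMulRegular hbJ (isSMulRegular_dual hb K))
  have heval : Function.Surjective (g.dualMap.dualMap ∘ₗ Module.Dual.eval A (Fin n → A)) :=
    hsurj'.comp (Module.bijective_dual_eval A (Fin n → A)).2
  rw [Module.Dual.eval_naturality] at heval
  exact Function.Surjective.of_comp (g := g) heval

theorem isReflexive_of_isSMulRegular (hb : b ∈ nonZeroDivisors A)
    (hbJ : b ∈ Ideal.jacobson (⊥ : Ideal A))
    [HasInjectiveDimensionLE (ModuleCat.of A A) 1] (M : Type u) [AddCommGroup M]
    [Module A M] [Module.Finite A M] (hM : IsSMulRegular M b) : Module.IsReflexive A M := by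
  obtain ⟨n, g, hg⟩ := Module.Finite.exists_fin' A M
  let K := LinearMap.ker g
  have hexact : Function.Exact K.subtype g := LinearMap.exact_subtype_ker_map g
  have hsurj : Function.Surjective K.subtype.dualMap :=
    surjective_dualMap_of_subsingleton_ext K.subtype_injective hg hexact
      (subsingleton_ext_one_of_isSMulRegular hbJ hM)
  have hK : IsSMulRegular K b := (Module.Flat.isSMulRegular_of_nonZeroDivisors hb).submodule K b
  have hexact' : Function.Exact K.subtype.dualMap.dualMap g.dualMap.dualMap :=
    LinearMap.exact_lcomp_of_exact_of_surjective _
      (LinearMap.exact_lcomp_of_exact_of_surjective _ hexact hg) hsurj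
  exact ⟨LinearMap.injective_of_surjective_of_injective_of_right_exact _ _ _ _ _ _ _
    (Module.Dual.eval_naturality _) (Module.Dual.eval_naturality _) hexact hexact'
    (surjective_dual_eval hb hbJ K hK)
    (Module.bijective_dual_eval A (Fin n → A)).1 hg, surjective_dual_eval hb hbJ M hM⟩

theorem isReflexive_of_isGorensteinRing [Ring.KrullDimLE 1 A] (hA : IsGorensteinRing A)
    (hb : b ∈ nonZeroDivisors A) (hbJ : b ∈ Ideal.jacobson (⊥ : Ideal A)) (M : Type u)
    [AddCommGroup M] [Module A M] [Module.Finite A M] (hM : IsTorsionFreeModule A M) :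
    Module.IsReflexive A M := by
  obtain ⟨n, hn⟩ := exists_hasInjectiveDimensionLE_of_isGorensteinRing hA
    (finite_setOf_isMaximal hb hbJ)
  have := hasInjectiveDimensionLE_one hb hbJ hn
  exact isReflexive_of_isSMulRegular hb hbJ M
    (isSMulRegular_iff_right_eq_zero_of_smul.2 (hM b hb))

end Reflexive

section TotalFractions

variable {A Q : Type*} [CommRing A] [CommRing Q] [Algebra A Q] {I J K C : Submodule A Q}

theorem div_div_eq_div_mul : I / J / K = I / (J * K) :=
  eq_of_forall_le_iff fun L => by
    simp only [Submodule.le_div_iff_mul_le, mul_assoc, mul_comm K J]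

theorem div_one_eq_self : I / 1 = I :=
  eq_of_forall_le_iff fun L => by rw [Submodule.le_div_iff_mul_le, mul_one]

theorem mul_one_div_eq_one_of_div_div_self (hone : C / (C / 1) = 1) (hC : 1 / (1 / C) = C)
    (hmul : C / (C / (C * (1 / C))) = C * (1 / C)) : C * (1 / C) = 1 := by
  have hself : C / C = 1 := by rwa [div_one_eq_self] at hone
  calc C * (1 / C) = C / (C / (C * (1 / C))) := hmul.symm
    _ = C / (C / C / (1 / C)) := by rw [div_div_eq_div_mul]
    _ = C / (1 / (1 / C)) := by rw [hself]
    _ = 1 := by rw [hC, hself]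

theorem fg_one_div_of_isUnit_mem [IsNoetherianRing A] (hI : ∃ x ∈ I, IsUnit x) :
    (1 / I).FG := by
  obtain ⟨x, hxI, hx⟩ := hI
  obtain ⟨v, hv⟩ := hx.exists_right_inv
  refine Submodule.FG.of_le (Submodule.fg_span_singleton v) fun q hq => ?_
  obtain ⟨a, ha⟩ := Submodule.mem_one.1 (Submodule.mem_div_iff_forall_mul_mem.1 hq x hxI)
  refine Submodule.mem_span_singleton.2 ⟨a, ?_⟩
  rw [Algebra.smul_def, ha, mul_assoc, hv, mul_one]

/-- For submodules `I`, `J` of an algebra `Q`, an element of the quotient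
`J / I = {q | q I ⊆ J}` acts as a linear map `I → J` by multiplication. -/
noncomputable def divToHom (J I : Submodule A Q) : ↥(J / I) →ₗ[A] (I →ₗ[A] J) :=
  LinearMap.mk₂ A (fun q x => ⟨q * x, Submodule.mem_div_iff_forall_mul_mem.1 q.2 x x.2⟩)
    (fun _ _ _ => Subtype.ext (add_mul _ _ _)) (fun _ _ _ => Subtype.ext (smul_mul_assoc _ _ _))
    (fun _ _ _ => Subtype.ext (mul_add _ _ _)) (fun _ _ _ => Subtype.ext (mul_smul_comm _ _ _))

variable [IsFractionRing A Q]

theorem mul_apply_comm (f : I →ₗ[A] Q) (x y : I) : (x : Q) * f y = y * f x := by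
  obtain ⟨⟨a, s⟩, ha⟩ := IsLocalization.surj (nonZeroDivisors A) (x : Q)
  obtain ⟨⟨c, t⟩, hc⟩ := IsLocalization.surj (nonZeroDivisors A) (y : Q)
  have hxy : ((t : A) * a) • y = ((s : A) * c) • x := Subtype.ext <| by
    simp only [Submodule.coe_smul, Algebra.smul_def, map_mul, ← ha, ← hc]
    ring
  have hf := congrArg f hxy
  simp only [map_smul, Algebra.smul_def, map_mul, ← ha, ← hc] at hf
  refine (IsLocalization.map_units Q (s * t)).mul_left_cancel ?_
  rw [Submonoid.coe_mul, map_mul]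
  linear_combination hf

theorem bijective_divToHom (hI : ∃ x ∈ I, IsUnit x) : Function.Bijective (divToHom J I) := by
  obtain ⟨x, hxI, hx⟩ := hI
  refine ⟨fun p q hpq => Subtype.ext (hx.mul_right_cancel ?_), fun f => ?_⟩
  · exact congrArg Subtype.val (LinearMap.congr_fun hpq ⟨x, hxI⟩)
  · obtain ⟨v, hv⟩ := hx.exists_left_inv
    have hmul (y : I) : v * f ⟨x, hxI⟩ * y = f y := by
      have hcomm : x * (f y : Q) = y * f ⟨x, hxI⟩ := mul_apply_comm (J.subtype ∘ₗ f) ⟨x, hxI⟩ y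
      linear_combination (f y : Q) * hv - v * hcomm
    refine ⟨⟨v * f ⟨x, hxI⟩, Submodule.mem_div_iff_forall_mul_mem.2 fun y hy => ?_⟩, ?_⟩
    · exact hmul ⟨y, hy⟩ ▸ (f ⟨y, hy⟩).2
    · exact LinearMap.ext fun y => Subtype.ext (hmul y)

/-- The identification of `J / I` with the module of linear maps `I → J`, for submodules of the
total ring of fractions with `I` regular, i.e. containing a unit. -/
noncomputable def divEquivHom (J : Submodule A Q) (hI : ∃ x ∈ I, IsUnit x) :
    ↥(J / I) ≃ₗ[A] (I →ₗ[A] J) :=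
  LinearEquiv.ofBijective (divToHom J I) (bijective_divToHom hI)

/-- The identification of `1 / I` with the dual of a regular submodule `I` of the total ring of
fractions; here `1 : Submodule A Q` is the image of `A`. -/
noncomputable def oneDivEquivDual (hI : ∃ x ∈ I, IsUnit x) : ↥(1 / I) ≃ₗ[A] Module.Dual A I :=
  divEquivHom 1 hI ≪≫ₗ LinearEquiv.congrRight (LinearEquiv.ofEq _ _ Submodule.one_eq_range ≪≫ₗ
    (LinearEquiv.ofInjective (Algebra.linearMap A Q) (IsFractionRing.injective A Q)).symm)

theorem algebraMap_oneDivEquivDual_apply (hI : ∃ x ∈ I, IsUnit x) (q : ↥(1 / I)) (x : I) :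
    algebraMap A Q (oneDivEquivDual hI q x) = q * x :=
  congrArg Subtype.val (LinearEquiv.apply_symm_apply
    (LinearEquiv.ofInjective (Algebra.linearMap A Q) (IsFractionRing.injective A Q)) _)

theorem exists_isUnit_mem_one_div_of_fg (hI : I.FG) : ∃ x ∈ 1 / I, IsUnit x := by
  obtain ⟨a, ha, hint⟩ := FractionalIdeal.isFractional_of_fg (S := nonZeroDivisors A) hI
  refine ⟨algebraMap A Q a, Submodule.mem_div_iff_forall_mul_mem.2 fun x hx => ?_,
    IsLocalization.map_units Q ⟨a, ha⟩⟩
  rw [← Algebra.smul_def, Submodule.mem_one]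
  exact hint x hx

theorem one_div_one_div_eq_self (hI : ∃ x ∈ I, IsUnit x) (hI' : ∃ x ∈ 1 / I, IsUnit x)
    (hrefl : Module.IsReflexive A I) : 1 / (1 / I) = I := by
  refine le_antisymm (fun q hq => ?_) ?_
  · obtain ⟨y, hy⟩ := (Module.bijective_dual_eval A I).2
      (oneDivEquivDual hI' ⟨q, hq⟩ ∘ₗ (oneDivEquivDual hI).symm.toLinearMap)
    obtain ⟨x, hxI, hx⟩ := hI'
    have hxy := LinearMap.congr_fun hy (oneDivEquivDual hI ⟨x, hxI⟩)
    simp only [Module.Dual.eval_apply, LinearMap.comp_apply, LinearEquiv.coe_coe,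
      LinearEquiv.symm_apply_apply] at hxy
    have hmul := congrArg (algebraMap A Q) hxy
    rw [algebraMap_oneDivEquivDual_apply, algebraMap_oneDivEquivDual_apply, mul_comm] at hmul
    obtain rfl : (y : Q) = q := hx.mul_right_cancel hmul
    exact y.2
  · rw [Submodule.le_div_iff_mul_le]
    exact Submodule.mul_one_div_le_one

theorem exists_eq_span_singleton_of_mul_one_div_eq_one
    (hfin : {p : Ideal A | p.IsMaximal}.Finite) (hI : I.FG) (hI' : (1 / I).FG)
    (hinv : I * (1 / I) = 1) : ∃ x, I = Submodule.span A {x} := by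
  let J : FractionalIdeal (nonZeroDivisors A) Q := ⟨I, FractionalIdeal.isFractional_of_fg hI⟩
  let J' : FractionalIdeal (nonZeroDivisors A) Q :=
    ⟨1 / I, FractionalIdeal.isFractional_of_fg hI'⟩
  have hJ : J * J' = 1 := FractionalIdeal.coeToSubmodule_injective <|
    (FractionalIdeal.coe_mul J J').trans (hinv.trans FractionalIdeal.coe_one.symm)
  exact (FractionalIdeal.isPrincipal.of_finite_maximals_of_inv le_rfl hfin J J' hJ).principal

end TotalFractions

section TraceForm

variable {R S M : Type*} [CommRing R] [CommRing S] [Algebra R S] [AddCommGroup M] [Module R M]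
  [Module S M] [IsScalarTower R S M]

/-- Composition with an `R`-linear form `τ : S → R`, turning `S`-linear forms on a module into
`R`-linear forms. -/
def dualCompForm (τ : S →ₗ[R] R) (M : Type*) [AddCommGroup M] [Module R M] [Module S M]
    [IsScalarTower R S M] : Module.Dual S M →ₗ[R] Module.Dual R M where
  toFun g := τ ∘ₗ g.restrictScalars R
  map_add' _ _ := LinearMap.ext fun _ => map_add τ _ _
  map_smul' r _ := LinearMap.ext fun _ => map_smul τ r _

theorem dualCompForm_apply (τ : S →ₗ[R] R) (g : Module.Dual S M) (m : M) :
    dualCompForm τ M g m = τ (g m) := rfl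

variable {τ : S →ₗ[R] R}

theorem bijective_dualCompForm (hτ : Function.Bijective ((LinearMap.mul R S).compr₂ τ)) :
    Function.Bijective (dualCompForm τ M) := by
  refine ⟨(injective_iff_map_eq_zero _).2 fun g hg => LinearMap.ext fun m => ?_, fun f => ?_⟩
  · refine hτ.1 (LinearMap.ext fun s => ?_)
    have hsm : τ (g (s • m)) = 0 := LinearMap.congr_fun hg (s • m)
    rw [map_smul, smul_eq_mul, mul_comm] at hsm
    simpa only [LinearMap.compr₂_apply, LinearMap.mul_apply', LinearMap.zero_apply, map_zero]
      using hsm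
  · choose g hg using fun m => hτ.2 (f ∘ₗ (LinearMap.toSpanSingleton S M m).restrictScalars R)
    have hτg (m : M) (s : S) : τ (g m * s) = f (s • m) := LinearMap.congr_fun (hg m) s
    let g' : M →ₗ[S] S :=
      { toFun := g
        map_add' m n := hτ.1 <| LinearMap.ext fun s => by
          change τ ((g (m + n)) * s) = τ ((g m + g n) * s)
          rw [add_mul, map_add, hτg, hτg, hτg, smul_add, map_add]
        map_smul' t m := hτ.1 <| LinearMap.ext fun s => by
          change τ (g (t • m) * s) = τ ((t * g m) * s)
          rw [hτg, mul_assoc, mul_left_comm, hτg, smul_smul, mul_comm] }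
    refine ⟨g', LinearMap.ext fun m => ?_⟩
    rw [dualCompForm_apply, ← mul_one (g' m)]
    exact (hτg m 1).trans (congrArg f (one_smul S m))

theorem isReflexive_restrictScalars (hτ : Function.Bijective ((LinearMap.mul R S).compr₂ τ))
    (hM : Module.IsReflexive S M) : Module.IsReflexive R M := by
  let e := LinearEquiv.ofBijective (dualCompForm τ M) (bijective_dualCompForm hτ)
  have hcomp : e.dualMap ∘ Module.Dual.eval R M =
      dualCompForm τ (Module.Dual S M) ∘ Module.Dual.eval S M := rfl
  refine ⟨(Function.Bijective.of_comp_iff' e.dualMap.bijective _).1 ?_⟩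
  rw [hcomp]
  exact (bijective_dualCompForm hτ).comp (Module.bijective_dual_eval S M)

end TraceForm

section BirationalExtension

variable {R Q : Type*} [CommRing R] [CommRing Q] [Algebra R Q] {S : Subalgebra R Q}

theorem toSubmodule_div_self :
    Subalgebra.toSubmodule S / Subalgebra.toSubmodule S = Subalgebra.toSubmodule S := by
  refine le_antisymm (fun q hq => ?_) ?_
  · simpa only [mul_one] using Submodule.mem_div_iff_forall_mul_mem.1 hq 1 S.one_mem
  · rw [Submodule.le_div_iff_mul_le, S.isIdempotentElem_toSubmodule.eq]

theorem exists_isUnit_mem_toSubmodule : ∃ x ∈ Subalgebra.toSubmodule S, IsUnit x :=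
  ⟨1, S.one_mem, isUnit_one⟩

theorem exists_isUnit_mem_one_div_toSubmodule [IsFractionRing R Q] [Module.Finite R S] :
    ∃ x ∈ 1 / Subalgebra.toSubmodule S, IsUnit x :=
  exists_isUnit_mem_one_div_of_fg (Module.Finite.iff_fg.1 ‹_›)

/-- The conductor `(R : S)` of a subalgebra `S`, as an `S`-submodule. -/
def conductorSubmodule (S : Subalgebra R Q) : Submodule S Q where
  __ := 1 / Subalgebra.toSubmodule S
  smul_mem' s q hq := Submodule.mem_div_iff_forall_mul_mem.2 fun t ht => by
    rw [Subalgebra.smul_def, smul_eq_mul, mul_comm (s : Q), mul_assoc]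
    exact Submodule.mem_div_iff_forall_mul_mem.1 hq _ (S.mul_mem s.2 ht)

theorem restrictScalars_conductorSubmodule_div (D : Submodule S Q) :
    (conductorSubmodule S / D).restrictScalars R = 1 / D.restrictScalars R := by
  ext q
  simp only [Submodule.restrictScalars_mem, Submodule.mem_div_iff_forall_mul_mem]
  refine ⟨fun h x hx => ?_, fun h x hx => Submodule.mem_div_iff_forall_mul_mem.2 fun s hs => ?_⟩
  · simpa only [mul_one] using Submodule.mem_div_iff_forall_mul_mem.1 (h x hx) 1 S.one_mem
  · rw [mul_assoc, mul_comm x]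
    exact h _ (D.smul_mem ⟨s, hs⟩ hx)

theorem conductorSubmodule_le_one : conductorSubmodule S ≤ 1 := fun q hq => by
  obtain ⟨r, hr⟩ := Submodule.mem_one.1 (Submodule.mem_div_iff_forall_mul_mem.1 hq 1 S.one_mem)
  rw [mul_one] at hr
  exact Submodule.mem_one.2 ⟨algebraMap R S r, hr⟩

theorem conductorSubmodule_div_div_eq_self [IsFractionRing R Q] [Module.Finite R S]
    {D : Submodule S Q} (hfg : D.FG) (hD : ∃ x ∈ D, IsUnit x) (hrefl : Module.IsReflexive R D) :
    conductorSubmodule S / (conductorSubmodule S / D) = D := by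
  have : Module.Finite S D := Module.Finite.iff_fg.2 hfg
  have hDR : (D.restrictScalars R).FG := Module.Finite.iff_fg.1 (Module.Finite.trans (R := R) S D)
  apply Submodule.restrictScalars_injective R
  rw [restrictScalars_conductorSubmodule_div, restrictScalars_conductorSubmodule_div]
  exact one_div_one_div_eq_self hD (exists_isUnit_mem_one_div_of_fg hDR) hrefl

variable [IsFractionRing R Q]

theorem algebraMap_mem_nonZeroDivisors_subalgebra {a : R} (ha : a ∈ nonZeroDivisors R) :
    algebraMap R S a ∈ nonZeroDivisors S :=
  mem_nonZeroDivisors_of_injective (f := S.val) Subtype.val_injective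
    (IsLocalization.map_units Q ⟨a, ha⟩).mem_nonZeroDivisors

theorem isUnit_coe_of_mem_nonZeroDivisors {s : S} (hs : s ∈ nonZeroDivisors S) :
    IsUnit (s : Q) := by
  obtain ⟨⟨a, t⟩, ha⟩ := IsLocalization.surj (nonZeroDivisors R) (s : Q)
  have hinj : Function.Injective (algebraMap R S) := fun x y h =>
    IsFractionRing.injective R Q (congrArg S.val h)
  have haS : algebraMap R S a ∈ nonZeroDivisors S := by
    rw [show algebraMap R S a = s * algebraMap R S t from Subtype.ext ha.symm]
    exact mul_mem hs (algebraMap_mem_nonZeroDivisors_subalgebra t.2)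
  have hunit := IsLocalization.map_units Q
    (⟨a, mem_nonZeroDivisors_of_injective hinj haS⟩ : nonZeroDivisors R)
  exact isUnit_of_mul_isUnit_left (ha ▸ hunit)

theorem isFractionRing_subalgebra (S : Subalgebra R Q) : IsFractionRing S Q where
  map_units s := isUnit_coe_of_mem_nonZeroDivisors s.2
  surj q := by
    obtain ⟨⟨a, t⟩, ha⟩ := IsLocalization.surj (nonZeroDivisors R) q
    exact ⟨(algebraMap R S a, ⟨_, algebraMap_mem_nonZeroDivisors_subalgebra t.2⟩), ha⟩
  exists_of_eq {x y} h := ⟨1, by rw [Subtype.ext h]⟩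

theorem apply_eq_apply_one_mul (e : S →ₗ[R] Module.Dual R S) (s x : S) :
    e s x = e 1 (s * x) := by
  let d := oneDivEquivDual (exists_isUnit_mem_toSubmodule (S := S))
  let f : S →ₗ[R] Q := (1 / Subalgebra.toSubmodule S).subtype ∘ₗ d.symm.toLinearMap ∘ₗ e
  have hf (s x : S) : algebraMap R Q (e s x) = f s * x := by
    conv_lhs => rw [← d.apply_symm_apply (e s)]
    exact algebraMap_oneDivEquivDual_apply (I := Subalgebra.toSubmodule S) _ _ x
  have hcomm : (s : Q) * f 1 = (1 : S) * f s :=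
    mul_apply_comm (I := Subalgebra.toSubmodule S) f s (1 : S)
  apply IsFractionRing.injective R Q
  rw [hf, hf, S.coe_mul]
  rw [S.coe_one] at hcomm
  linear_combination -(x : Q) * hcomm

theorem isReflexive_of_selfDual (e : S ≃ₗ[R] Module.Dual R S) {M : Type*} [AddCommGroup M]
    [Module R M] [Module S M] [IsScalarTower R S M] (hM : Module.IsReflexive S M) :
    Module.IsReflexive R M := by
  have he : (LinearMap.mul R S).compr₂ (e 1) = e.toLinearMap :=
    LinearMap.ext₂ fun s x => (apply_eq_apply_one_mul e.toLinearMap s x).symm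
  refine isReflexive_restrictScalars (τ := e 1) ?_ hM
  rw [he]
  exact e.bijective

theorem isTorsionFreeModule_submodule (D : Submodule S Q) : IsTorsionFreeModule S D :=
  fun _ hs _ hx => Subtype.ext <|
    (isUnit_coe_of_mem_nonZeroDivisors hs).mul_right_eq_zero.1 (congrArg Subtype.val hx)

theorem exists_conductorSubmodule_eq_span_singleton [Module.Finite R S] [IsNoetherianRing S]
    (hfin : {p : Ideal S | p.IsMaximal}.Finite)
    (hR : ∀ D : Submodule S Q, D.FG → Module.IsReflexive R D)
    (hS : ∀ D : Submodule S Q, D.FG → Module.IsReflexive S D) :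
    ∃ x, conductorSubmodule S = Submodule.span S {x} := by
  have : IsFractionRing S Q := isFractionRing_subalgebra S
  set C := conductorSubmodule S
  have hone : (1 : Submodule S Q).FG :=
    Submodule.one_eq_span (R := S) (A := Q) ▸ Submodule.fg_span_singleton 1
  have hone' : ∃ x ∈ (1 : Submodule S Q), IsUnit x :=
    ⟨1, Submodule.mem_one.2 ⟨1, map_one _⟩, isUnit_one⟩
  have hCfg : C.FG := hone.of_le conductorSubmodule_le_one
  have hCunit : ∃ x ∈ C, IsUnit x := exists_isUnit_mem_one_div_toSubmodule
  have hEfg : (C * (1 / C)).FG := hone.of_le Submodule.mul_one_div_le_one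
  have hEunit : ∃ x ∈ C * (1 / C), IsUnit x :=
    hCunit.imp fun _ hx =>
      ⟨Submodule.le_self_mul_one_div conductorSubmodule_le_one hx.1, hx.2⟩
  have hinv : C * (1 / C) = 1 := mul_one_div_eq_one_of_div_div_self
    (conductorSubmodule_div_div_eq_self hone hone' (hR 1 hone))
    (one_div_one_div_eq_self hCunit (exists_isUnit_mem_one_div_of_fg hCfg) (hS C hCfg))
    (conductorSubmodule_div_div_eq_self hEfg hEunit (hR _ hEfg))
  exact exists_eq_span_singleton_of_mul_one_div_eq_one hfin hCfg
    (fg_one_div_of_isUnit_mem hCunit) hinv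

theorem nonempty_selfDual_of_conductorSubmodule_eq_span_singleton [Module.Finite R S] {x : Q}
    (hx : conductorSubmodule S = Submodule.span S {x}) :
    Nonempty (S ≃ₗ[R] Module.Dual R S) := by
  have hxunit : IsUnit x := by
    obtain ⟨y, hy, hyunit⟩ := exists_isUnit_mem_one_div_toSubmodule (S := S)
    obtain ⟨s, rfl⟩ := Submodule.mem_span_singleton.1 (hx ▸ hy : y ∈ Submodule.span S {x})
    exact isUnit_of_mul_isUnit_right (x := (s : Q)) hyunit
  have hinj : Function.Injective (LinearMap.toSpanSingleton S Q x) := fun _ _ hst =>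
    Subtype.ext (hxunit.mul_right_cancel hst)
  have hrange : LinearMap.range (LinearMap.toSpanSingleton S Q x) = conductorSubmodule S :=
    (LinearMap.range_toSpanSingleton x).trans hx.symm
  let e : S ≃ₗ[S] conductorSubmodule S :=
    LinearEquiv.ofInjective _ hinj ≪≫ₗ LinearEquiv.ofEq _ _ hrange
  exact ⟨e.restrictScalars R ≪≫ₗ oneDivEquivDual exists_isUnit_mem_toSubmodule⟩

theorem nonempty_selfDual_iff_isReflexive_and_conductor_stable [Module.Finite R S] :
    Nonempty (S ≃ₗ[R] Module.Dual R S) ↔ Module.IsReflexive R S ∧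
      Nonempty (↥(1 / Subalgebra.toSubmodule S) ≃ₗ[R]
        (↥(1 / Subalgebra.toSubmodule S) →ₗ[R] ↥(1 / Subalgebra.toSubmodule S))) := by
  have hCunit := exists_isUnit_mem_one_div_toSubmodule (S := S)
  have hSunit := exists_isUnit_mem_toSubmodule (S := S)
  set B := Subalgebra.toSubmodule S
  let eDual : ↥(1 / B) ≃ₗ[R] Module.Dual R S := oneDivEquivDual hSunit
  let eEndS : S ≃ₗ[R] (S →ₗ[R] S) :=
    LinearEquiv.ofEq _ _ toSubmodule_div_self.symm ≪≫ₗ divEquivHom B hSunit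
  constructor
  · rintro ⟨e⟩
    have eC : ↥(1 / B) ≃ₗ[R] S := eDual ≪≫ₗ e.symm
    exact ⟨isReflexive_of_selfDual e inferInstance, ⟨eC ≪≫ₗ eEndS ≪≫ₗ eC.symm.arrowCongr eC.symm⟩⟩
  · rintro ⟨hrefl, ⟨e⟩⟩
    have hEnd : 1 / B / (1 / B) = B := calc
      1 / B / (1 / B) = 1 / (1 / B) / B := by
        rw [div_div_eq_div_mul, div_div_eq_div_mul, mul_comm]
      _ = B / B := by rw [one_div_one_div_eq_self hSunit hCunit hrefl]
      _ = B := toSubmodule_div_self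
    exact ⟨LinearEquiv.ofEq _ _ hEnd.symm ≪≫ₗ divEquivHom _ hCunit ≪≫ₗ e.symm ≪≫ₗ eDual⟩

end BirationalExtension

section IntegralExtension

variable {A B : Type*} [CommRing A] [CommRing B] [Algebra A B] [Algebra.IsIntegral A B]

theorem ringKrullDim_le_of_isIntegral : ringKrullDim B ≤ ringKrullDim A :=
  Order.krullDim_le_of_strictMono (PrimeSpectrum.comap (algebraMap A B)) fun P P' hPP' =>
    Ideal.IsIntegral.comap_lt_comap (I := P.asIdeal) (J := P'.asIdeal) hPP'

theorem algebraMap_mem_jacobson_bot {a : A} (ha : a ∈ Ideal.jacobson (⊥ : Ideal A)) :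
    algebraMap A B a ∈ Ideal.jacobson (⊥ : Ideal B) := by
  refine Ideal.mem_sInf.2 fun {P} hP => ?_
  have : P.IsMaximal := hP.2
  have hmax : (P.comap (algebraMap A B)).IsMaximal :=
    Ideal.isMaximal_comap_of_isIntegral_of_isMaximal P
  exact Ideal.mem_sInf.1 ha ⟨bot_le, hmax⟩

end IntegralExtension

section Grade

variable {A : Type*} [CommRing A]

theorem exists_mem_nonZeroDivisors_of_grade_ne_zero {J : Ideal A} (hJ : J.grade ≠ 0) :
    ∃ a ∈ J, a ∈ nonZeroDivisors A := by
  contrapose! hJ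
  refine nonpos_iff_eq_zero.1 (sSup_le ?_)
  rintro _ ⟨rs, rfl, hrsJ, hrs⟩
  cases rs with
  | nil => exact le_rfl
  | cons a rs =>
    have ha := ((RingTheory.Sequence.isWeaklyRegular_cons_iff A a rs).1 hrs).1
    have ha0 : a ∈ nonZeroDivisors A :=
      isRegular_iff_mem_nonZeroDivisors.1 (isLeftRegular_iff_isRegular.1 ha)
    exact absurd ha0 (hJ a (hrsJ a List.mem_cons_self))

theorem exists_mem_jacobson_bot_mem_nonZeroDivisors (hCM : IsCohenMacaulayLocalRing A)
    (hdim : ringKrullDim A ≠ 0) :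
    ∃ a ∈ Ideal.jacobson (⊥ : Ideal A), a ∈ nonZeroDivisors A := by
  obtain ⟨_, _, hdepth⟩ := hCM
  have hgrade : (IsLocalRing.maximalIdeal A).grade ≠ 0 := fun h0 => hdim <| by
    rw [← hdepth, h0, WithBot.coe_zero]
  obtain ⟨a, ham, ha⟩ := exists_mem_nonZeroDivisors_of_grade_ne_zero hgrade
  exact ⟨a, IsLocalRing.maximalIdeal_le_jacobson ⊥ ham, ha⟩

end Grade

section Gorenstein

variable {R : Type u} [CommRing R] [Ring.KrullDimLE 1 R] {b : R}
  {S : Subalgebra R (FractionRing R)} [Module.Finite R S]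

theorem forall_isReflexive_iff_nonempty_selfDual (hb : b ∈ nonZeroDivisors R)
    (hbJ : b ∈ Ideal.jacobson (⊥ : Ideal R)) (hGor : IsGorensteinRing S) :
    (∀ (M : Type u) [AddCommGroup M] [Module R M] [Module S M] [IsScalarTower R S M],
        Module.Finite S M → IsTorsionFreeModule S M → Module.IsReflexive R M) ↔
      Nonempty (S ≃ₗ[R] Module.Dual R S) := by
  have : IsNoetherianRing S := hGor.1
  have : Ring.KrullDimLE 1 S :=
    ⟨(ringKrullDim_le_of_isIntegral (A := R)).trans Order.KrullDimLE.krullDim_le⟩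
  have hbS : algebraMap R S b ∈ nonZeroDivisors S := algebraMap_mem_nonZeroDivisors_subalgebra hb
  have hbJS : algebraMap R S b ∈ Ideal.jacobson (⊥ : Ideal S) := algebraMap_mem_jacobson_bot hbJ
  refine ⟨fun hrefl => ?_, fun ⟨e⟩ M _ _ _ _ _ hM => isReflexive_of_selfDual e
    (isReflexive_of_isGorensteinRing hGor hbS hbJS M hM)⟩
  obtain ⟨x, hx⟩ := exists_conductorSubmodule_eq_span_singleton (finite_setOf_isMaximal hbS hbJS)
    (fun D hD => hrefl D (Module.Finite.iff_fg.2 hD) (isTorsionFreeModule_submodule D))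
    (fun D hD => by
      have : Module.Finite S D := Module.Finite.iff_fg.2 hD
      exact isReflexive_of_isGorensteinRing hGor hbS hbJS D (isTorsionFreeModule_submodule D))
  exact nonempty_selfDual_of_conductorSubmodule_eq_span_singleton hx

end Gorenstein

theorem CM_subset_refl_iff_selfdual_iff_conductor_stable_general (R : Type u) [CommRing R]
    [Ring.KrullDimLE 1 R] {b : R} (hb : b ∈ nonZeroDivisors R)
    (hbJ : b ∈ Ideal.jacobson (⊥ : Ideal R)) (S : Subalgebra R (FractionRing R))
    [Module.Finite R S] (hGor : IsGorensteinRing S) :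
    ((∀ (M : Type u) [AddCommGroup M] [Module R M] [Module S M] [IsScalarTower R S M],
        Module.Finite S M → IsTorsionFreeModule S M → Module.IsReflexive R M) ↔
      Nonempty (S ≃ₗ[R] (S →ₗ[R] R))) ∧
    (Nonempty (S ≃ₗ[R] (S →ₗ[R] R)) ↔
      (Module.IsReflexive R S ∧
        Nonempty ((↥(conductorFrac R S)) ≃ₗ[R]
          ((↥(conductorFrac R S)) →ₗ[R] (↥(conductorFrac R S)))))) :=
  ⟨forall_isReflexive_iff_nonempty_selfDual hb hbJ hGor,
    nonempty_selfDual_iff_isReflexive_and_conductor_stable⟩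

/-- for a Gorenstein module finite birational extension `S` of `R`,
the following are equivalent: (i) `CM(S) ⊆ refl(R)`; (ii) `S ≅ Hom_R(S, R)`;
(iii) `S` is a reflexive `R`-module and the conductor is a stable ideal. -/
theorem CM_subset_refl_iff_selfdual_iff_conductor_stable (R : Type u) [CommRing R]
    (hCM : IsCohenMacaulayLocalRing R) (hdim : ringKrullDim R = 1)
    (hGG : IsGenericallyGorenstein R)
    (S : Subalgebra R (FractionRing R)) (hfin : Module.Finite R S)
    (hGor : IsGorensteinRing S) :
    ((∀ (M : Type u) [AddCommGroup M] [Module R M] [Module S M] [IsScalarTower R S M],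
        Module.Finite S M → IsTorsionFreeModule S M → Module.IsReflexive R M) ↔
      Nonempty (S ≃ₗ[R] (S →ₗ[R] R))) ∧
    (Nonempty (S ≃ₗ[R] (S →ₗ[R] R)) ↔
      (Module.IsReflexive R S ∧
        Nonempty ((↥(conductorFrac R S)) ≃ₗ[R]
          ((↥(conductorFrac R S)) →ₗ[R] (↥(conductorFrac R S)))))) := by
  have : Ring.KrullDimLE 1 R := ⟨hdim.le⟩
  obtain ⟨b, hbJ, hb⟩ := exists_mem_jacobson_bot_mem_nonZeroDivisors hCM (hdim ▸ one_ne_zero)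
  exact CM_subset_refl_iff_selfdual_iff_conductor_stable_general R hb hbJ S hGor
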